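/- Let L be a prime with L ≡ 3 (mod 4) and let ā : ZMod L → {0,1} be defined by ā(i) = 1 if i ≠ 0 and i is a quadratic residue modulo L, and ā(i) = 0 otherwise. Then for every integer s ≥ 3, all distinct i₁, …, i_s ∈ ZMod L and all bits b₁, …, b_s ∈ {0,1}, the pattern count d_{i₁,…,i_s}(b₁,…,b_s) = #{ j ∈ ZMod L : ā(j + i_t) = b_t for all t = 1,…,s } satisfies | d_{i₁,…,i_s}(b₁,…,b_s) − L/2^s | ≤ W(s), where W(s) = ( √L·(2^{s−1}(s−3) + 2) + 2^{s−1}(s+1) − 1 ) / 2^s. -/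

import Mathlib

/-- The Legendre-sequence predicate: `legSeq L i` holds iff `i` is a nonzero quadratic
residue modulo `L`; the binary sequence `ā` takes value `1` exactly where this holds. -/
def legSeq (L : ℕ) (i : ZMod L) : Prop := i ≠ 0 ∧ IsSquare i

/-- The bound `W(s) = (√L·(2^{s−1}(s−3)+2) + 2^{s−1}(s+1) − 1)/2^s`. -/
noncomputable def legBound (L : ℕ) (s : ℕ) : ℝ :=
  (Real.sqrt L * (2 ^ (s - 1) * ((s : ℝ) - 3) + 2) + 2 ^ (s - 1) * ((s : ℝ) + 1) - 1) / 2 ^ s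

open Polynomial

theorem sum_C_mul_ne_zero_of_injective_natDegree {K ι : Type*} [Field K] [Fintype ι]
    (e : ι → K[X]) (he : ∀ t, e t ≠ 0) (hinj : Function.Injective fun t ↦ (e t).natDegree)
    (w : ι → K) (hw : w ≠ 0) : ∑ t, C (w t) * e t ≠ 0 := by
  obtain ⟨t₀, ht₀⟩ := Function.ne_iff.mp hw
  have hdisj : Set.Pairwise {t | t ∈ Finset.univ ∧ C (w t) * e t ≠ 0}
      (Function.onFun Ne (degree ∘ fun t ↦ C (w t) * e t)) := by
    rintro t ⟨-, ht⟩ u ⟨-, hu⟩ htu hdeg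
    have ht' : w t ≠ 0 := fun h ↦ ht (by simp [h])
    have hu' : w u ≠ 0 := fun h ↦ hu (by simp [h])
    refine htu (hinj ?_)
    simp only [Function.comp, degree_C_mul ht', degree_C_mul hu'] at hdeg
    exact natDegree_eq_of_degree_eq hdeg
  intro h
  have hsup := degree_sum_eq_of_disjoint _ _ hdisj
  rw [h, degree_zero, eq_comm, Finset.sup_eq_bot_iff] at hsup
  have := hsup t₀ (Finset.mem_univ _)
  rw [degree_eq_bot] at this
  exact mul_ne_zero (C_ne_zero.mpr ht₀) (he t₀) this

theorem exists_ne_zero_sum_C_mul_eq_zero {K ι : Type*} [Field K] [Fintype ι] (N : ℕ)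
    (g : ι → K[X]) (hg : ∀ t, (g t).natDegree < N) (hN : N < Fintype.card ι) :
    ∃ w : ι → K, w ≠ 0 ∧ ∑ t, C (w t) * g t = 0 := by
  let Φ : (ι → K) →ₗ[K] (Fin N → K) :=
    (LinearMap.pi fun n : Fin N ↦ lcoeff K n) ∘ₗ Fintype.linearCombination K g
  have hker : LinearMap.ker Φ ≠ ⊥ := Φ.ker_ne_bot_of_finrank_lt (by simpa using hN)
  obtain ⟨w, hw, hw0⟩ := (Submodule.ne_bot_iff _).mp hker
  refine ⟨w, hw0, ?_⟩
  ext n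
  by_cases hn : n < N
  · have := congrFun (LinearMap.mem_ker.mp hw) ⟨n, hn⟩
    simpa [Φ, Fintype.linearCombination_apply] using this
  · rw [finsetSum_coeff, coeff_zero]
    refine Finset.sum_eq_zero fun t _ ↦ ?_
    rw [coeff_C_mul, coeff_eq_zero_of_natDegree_lt ((hg t).trans_le (not_lt.mp hn)), mul_zero]

/-- Stepanov's bound, for a field whose order is a square `Q ^ 2`. -/
theorem two_mul_card_eval_pow_eq_le {K : Type*} [Field K] [Fintype K] [DecidableEq K]
    (p e Q : ℕ) [Fact p.Prime] [CharP K p] (hQp : Q = p ^ e) (hcard : Fintype.card K = Q ^ 2)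
    (hQ : Odd Q) (f : K[X]) (hf : f.Monic) (hm : Odd f.natDegree)
    (hmQ : 2 * f.natDegree + 2 ≤ Q) (a : K) :
    2 * (Finset.univ.filter fun x : K ↦ f.eval x ^ ((Q ^ 2 - 1) / 2) = a).card ≤
      Q ^ 2 + (3 * f.natDegree + 4) * Q := by
  set m := f.natDegree with hmdef
  obtain ⟨H, hH⟩ : ∃ H, 2 * H = Q + 1 := ⟨(Q + 1) / 2, by grind⟩
  obtain ⟨D, hD⟩ : ∃ D, 2 * D + m = Q := ⟨(Q - m) / 2, by grind⟩
  obtain ⟨J, hJ⟩ : ∃ J, 2 * J = Q + 2 * m + 3 := ⟨(Q + 2 * m + 3) / 2, by grind⟩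
  have hc : (Q ^ 2 - 1) / 2 + H = Q * H := by
    have h1 : (Q ^ 2 - 1) / 2 + H = (Q ^ 2 - 1 + 2 * H) / 2 := by omega
    have h2 : 1 ≤ Q ^ 2 := Nat.one_le_pow _ _ (by omega)
    rw [h1, hH, show Q ^ 2 - 1 + (Q + 1) = Q * H * 2 by
      have : Q * H * 2 = Q ^ 2 + Q := by rw [mul_assoc, mul_comm H, hH]; ring
      omega, Nat.mul_div_cancel _ two_pos]
  let ι := Bool × Fin J × Fin D
  let E : ι → K[X] := fun t ↦ X ^ ((t.2.2 : ℕ) + Q * t.2.1) * f ^ (H * t.1.toNat)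
  let G : ι → K[X] := fun t ↦
    C (a ^ t.1.toNat) * (X ^ (Q * t.2.2 + (t.2.1 : ℕ)) * f ^ (H * t.1.toNat))
  have hmH : 2 * (m * H) = m * Q + m := by rw [mul_left_comm, hH]; ring
  have hEdeg (t : ι) : (E t).natDegree = (t.2.2 : ℕ) + Q * t.2.1 + m * H * t.1.toNat := by
    simp only [E]
    rw [(monic_X_pow _).natDegree_mul (hf.pow _), natDegree_X_pow, hf.natDegree_pow]
    ring
  have hGdeg (t : ι) : (G t).natDegree < Q * D + m * H + J := by
    refine (natDegree_C_mul_le _ _).trans_lt ?_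
    rw [(monic_X_pow _).natDegree_mul (hf.pow _), natDegree_X_pow, hf.natDegree_pow]
    have h1 : Q * (t.2.2 : ℕ) ≤ Q * D := Nat.mul_le_mul_left _ t.2.2.2.le
    have h2 : H * t.1.toNat * f.natDegree ≤ m * H := by
      rw [mul_right_comm, mul_comm m]
      exact mul_le_of_le_one_right (Nat.zero_le _) (Bool.toNat_le _)
    have h3 := t.2.1.2
    omega
  obtain ⟨w, hw, hGw⟩ := exists_ne_zero_sum_C_mul_eq_zero _ G hGdeg (by
    simp only [ι, Fintype.card_prod, Fintype.card_bool, Fintype.card_fin]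
    zify at *
    have e1 : (2 : ℤ) * D = Q - m := by linarith
    have e2 : (2 : ℤ) * J = Q + 2 * m + 3 := by linarith
    nlinarith)
  have hE0 (t : ι) : E t ≠ 0 := ((monic_X_pow _).mul (hf.pow _)).ne_zero
  have hEinj : Function.Injective fun t ↦ (E t).natDegree := by
    have key (i j i' j' : ℕ) (hi : i < Q) (hi' : i' < Q) (h : i + Q * j = i' + Q * j') :
        i = i' ∧ j = j' := by
      have h1 : i = i' := by
        have := congrArg (· % Q) h
        simpa [Nat.add_mul_mod_self_left, Nat.mod_eq_of_lt hi, Nat.mod_eq_of_lt hi'] using this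
      subst h1
      exact ⟨rfl, Nat.eq_of_mul_eq_mul_left (by omega) (Nat.add_left_cancel h)⟩
    rintro ⟨b, j, i⟩ ⟨b', j', i'⟩ h
    simp only [hEdeg] at h
    have hi := i.2
    have hi' := i'.2
    have hdiff (i j i' j' : ℕ) (hi : i < D) (hi' : i' < D) : i + Q * j ≠ i' + Q * j' + m * H := by
      intro h
      have := (key (2 * i) (2 * j) (2 * i' + m) (2 * j' + m) (by omega) (by omega)
        (by linarith)).1
      grind
    cases b <;> cases b' <;> simp only [Bool.toNat_false, Bool.toNat_true, mul_zero, mul_one,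
      add_zero] at h
    · obtain ⟨h1, h2⟩ := key _ _ _ _ (by omega) (by omega) h
      exact Prod.ext rfl (Prod.ext (Fin.ext h2) (Fin.ext h1))
    · exact absurd h (hdiff _ _ _ _ hi hi')
    · exact absurd h.symm (hdiff _ _ _ _ hi' hi)
    · obtain ⟨h1, h2⟩ := key _ _ _ _ (by omega) (by omega) (Nat.add_right_cancel h)
      exact Prod.ext rfl (Prod.ext (Fin.ext h2) (Fin.ext h1))
  set R : K[X] := ∑ t, C (w t ^ Q) * E t with hR
  have hR0 : R ≠ 0 := by
    refine sum_C_mul_ne_zero_of_injective_natDegree E hE0 hEinj (fun t ↦ w t ^ Q) fun h ↦ hw ?_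
    funext t
    exact pow_eq_zero_iff (by omega : Q ≠ 0) |>.mp (congrFun h t)
  have hpow (y : K) : y ^ (Q * Q) = y := by rw [← pow_two, ← hcard, FiniteField.pow_card]
  have hroot (x : K) (hx : f.eval x ^ ((Q ^ 2 - 1) / 2) = a) : R.eval x = 0 := by
    have : ExpChar K p := .prime Fact.out
    have hQ0 : Q ≠ 0 := by omega
    refine (pow_eq_zero_iff hQ0).mp ?_
    rw [hR, eval_finsetSum, hQp, sum_pow_char_pow, ← hQp]
    have := congrArg (eval x) hGw
    rw [eval_finsetSum, eval_zero] at this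
    rw [← this]
    refine Finset.sum_congr rfl fun t _ ↦ ?_
    have hfx : f.eval x ^ (H * Q) = a * f.eval x ^ H := by
      rw [mul_comm, ← hc, pow_add, hx]
    simp only [E, G, eval_mul, eval_C, eval_pow, eval_X, mul_pow, ← pow_mul]
    rw [hpow, mul_right_comm H, pow_mul _ (H * Q), hfx, mul_pow, ← pow_mul, add_mul, pow_add,
      show Q * (t.2.1 : ℕ) * Q = Q * Q * t.2.1 by ring, pow_mul x (Q * Q), hpow, pow_add,
      mul_comm (t.2.2 : ℕ) Q]
    ring
  have hRdeg : R.natDegree ≤ D + Q * J + m * H := by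
    refine natDegree_sum_le_of_forall_le _ _ fun t _ ↦ (natDegree_C_mul_le _ _).trans ?_
    rw [hEdeg]
    have h1 : Q * (t.2.1 : ℕ) ≤ Q * J := Nat.mul_le_mul_left _ t.2.1.2.le
    have h2 : m * H * t.1.toNat ≤ m * H :=
      mul_le_of_le_one_right (Nat.zero_le _) (Bool.toNat_le _)
    have h3 := t.2.2.2
    omega
  have hle := card_le_degree_of_subset_roots (p := R)
    (Z := Finset.univ.filter fun x : K ↦ f.eval x ^ ((Q ^ 2 - 1) / 2) = a) (by
      intro x hx
      rw [mem_roots hR0]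
      exact hroot x (by simpa using hx))
  have hfin : 2 * (D + Q * J + m * H) = Q ^ 2 + (3 * m + 4) * Q := by
    have : 2 * (Q * J) = Q * (Q + 2 * m + 3) := by rw [← hJ]; ring
    zify at *
    linarith
  omega

theorem abs_sum_quadraticChar_eval_le {K : Type*} [Field K] [Fintype K] [DecidableEq K]
    (p e : ℕ) [Fact p.Prime] [CharP K p] (hp : p ≠ 2)
    (hcard : Fintype.card K = (p ^ e) ^ 2) (f : K[X]) (hf : f.Monic) (hm : Odd f.natDegree) :
    |∑ x, quadraticChar K (f.eval x)| ≤ (4 * f.natDegree + 4) * (p : ℤ) ^ e := by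
  set Q := p ^ e with hQ
  have hodd : Odd Q := (Nat.Prime.odd_of_ne_two Fact.out hp).pow
  rw [show ((p : ℤ) ^ e) = (Q : ℤ) by simp [hQ]]
  have hval (y : K) : quadraticChar K y = 0 ∨ quadraticChar K y = 1 ∨ quadraticChar K y = -1 :=
    quadraticChar_isQuadratic K y
  by_cases hmQ : 2 * f.natDegree + 2 ≤ Q
  · have hchar : ringChar K ≠ 2 := by rwa [ringChar.eq K p]
    have hcount (a : ℤ) (ha : a = 1 ∨ a = -1) :
        2 * (Finset.univ.filter fun x : K ↦ quadraticChar K (f.eval x) = a).card ≤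
          Q ^ 2 + (3 * f.natDegree + 4) * Q := by
      refine le_trans ?_ (two_mul_card_eval_pow_eq_le p e Q hQ hcard hodd f hf hm hmQ (a : K))
      refine Nat.mul_le_mul_left _ (Finset.card_le_card fun x ↦ ?_)
      simp only [Finset.mem_filter, Finset.mem_univ, true_and]
      intro hx
      rw [← hx, quadraticChar_eq_pow_of_char_ne_two' hchar, hcard]
      congr 1
      have := hodd.pow (n := 2)
      grind
    have hzero : (Finset.univ.filter fun x : K ↦ quadraticChar K (f.eval x) = 0).card ≤
        f.natDegree := by
      refine card_le_degree_of_subset_roots fun x hx ↦ ?_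
      rw [mem_roots hf.ne_zero]
      exact quadraticChar_eq_zero_iff.mp (Finset.mem_filter.mp hx).2
    have hsum : ∑ x, quadraticChar K (f.eval x) =
        (Finset.univ.filter fun x : K ↦ quadraticChar K (f.eval x) = 1).card -
        (Finset.univ.filter fun x : K ↦ quadraticChar K (f.eval x) = -1).card := by
      simp only [Finset.card_filter, Nat.cast_sum, ← Finset.sum_sub_distrib]
      refine Finset.sum_congr rfl fun x _ ↦ ?_
      rcases hval (f.eval x) with h | h | h <;> simp [h]
    have htot : Q ^ 2 = (Finset.univ.filter fun x : K ↦ quadraticChar K (f.eval x) = 0).card +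
        (Finset.univ.filter fun x : K ↦ quadraticChar K (f.eval x) = 1).card +
        (Finset.univ.filter fun x : K ↦ quadraticChar K (f.eval x) = -1).card := by
      rw [← hcard, ← Finset.card_univ, Finset.card_eq_sum_ones]
      simp only [Finset.card_filter, ← Finset.sum_add_distrib]
      refine Finset.sum_congr rfl fun x _ ↦ ?_
      rcases hval (f.eval x) with h | h | h <;> simp [h]
    have h1 := hcount 1 (Or.inl rfl)
    have h2 := hcount (-1) (Or.inr rfl)
    have hmm : f.natDegree ≤ f.natDegree * Q := Nat.le_mul_of_pos_right _ (by omega)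
    rw [hsum, abs_le]
    zify at *
    constructor <;> linarith
  · calc |∑ x, quadraticChar K (f.eval x)| ≤ ∑ x : K, 1 := by
          refine (Finset.abs_sum_le_sum_abs _ _).trans (Finset.sum_le_sum fun x _ ↦ ?_)
          rcases hval (f.eval x) with h | h | h <;> simp [h]
      _ = (Q : ℤ) * Q := by simp [hcard, pow_two]
      _ ≤ _ := by
        push Not at hmQ
        zify at hmQ
        nlinarith [Int.natCast_nonneg Q, Int.natCast_nonneg f.natDegree]

theorem eval_eq_tsum_mul_eval_of_coe_eq_mk_mul (E : ℕ → ℂ) (P N : ℂ[X])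
    (h : (N : PowerSeries ℂ) = PowerSeries.mk E * P) (z : ℂ)
    (hE : Summable fun n ↦ ‖E n * z ^ n‖) :
    N.eval z = (∑' n, E n * z ^ n) * P.eval z := by
  have hpoly (P : ℂ[X]) : HasSum (fun n ↦ P.coeff n * z ^ n) (P.eval z) := by
    rw [eval_eq_sum_range]
    refine hasSum_sum_of_ne_finset_zero fun n hn ↦ ?_
    rw [coeff_eq_zero_of_natDegree_lt (by simpa [Nat.lt_succ_iff] using hn), zero_mul]
  have hP : Summable fun n ↦ ‖P.coeff n * z ^ n‖ := (hpoly P).summable.norm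
  rw [← (hpoly P).tsum_eq, ← (hpoly N).tsum_eq,
    tsum_mul_tsum_eq_tsum_sum_antidiagonal_of_summable_norm hE hP]
  refine tsum_congr fun n ↦ ?_
  rw [← coeff_coe, h, PowerSeries.coeff_mul, Finset.sum_mul]
  refine Finset.sum_congr rfl fun k hk ↦ ?_
  rw [PowerSeries.coeff_mk, coeff_coe, ← Finset.HasAntidiagonal.mem_antidiagonal.mp hk, pow_add]
  ring

/-- If the logarithmic derivative `X * M' / M` has coefficients of size `O(R ^ n)`, then every
nonzero root of `M` has absolute value at least `1 / R`. -/
theorem one_le_mul_norm_of_isRoot_of_log_deriv_bound (M : ℂ[X]) (hM : M ≠ 0) (E : ℕ → ℂ)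
    (h : ((X * derivative M : ℂ[X]) : PowerSeries ℂ) = PowerSeries.mk E * M)
    (B R : ℝ) (hR : 0 ≤ R) (hE : ∀ n, ‖E n‖ ≤ B * R ^ n) (z : ℂ) (hz : z ≠ 0)
    (hroot : M.IsRoot z) : 1 ≤ R * ‖z‖ := by
  by_contra! hlt
  obtain ⟨g, hg, hgz⟩ := exists_eq_pow_rootMultiplicity_mul_and_not_dvd M hM z
  obtain ⟨r, hr⟩ : ∃ r, M.rootMultiplicity z = r + 1 :=
    Nat.exists_eq_succ_of_ne_zero ((rootMultiplicity_pos hM).mpr hroot).ne'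
  rw [hr] at hg
  have hne : (((X - C z) ^ r : ℂ[X]) : PowerSeries ℂ) ≠ 0 := by
    rw [Ne, coe_eq_zero_iff]
    exact pow_ne_zero _ (X_sub_C_ne_zero z)
  have hred : ((X * (C (r + 1 : ℂ) * g + (X - C z) * derivative g) : ℂ[X]) : PowerSeries ℂ) =
      PowerSeries.mk E * ((X - C z) * g : ℂ[X]) := by
    refine mul_left_cancel₀ hne ?_
    rw [mul_left_comm, ← coe_mul, ← coe_mul,
      show (X - C z) ^ r * ((X - C z) * g) = M by rw [hg, pow_succ, mul_assoc], ← h, hg]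
    congr 1
    simp [derivative_mul, derivative_pow]
    ring
  have hsum : Summable fun n ↦ ‖E n * z ^ n‖ := by
    refine Summable.of_nonneg_of_le (fun _ ↦ norm_nonneg _) (fun n ↦ ?_)
      ((summable_geometric_of_lt_one (by positivity) hlt).mul_left B)
    rw [norm_mul, norm_pow, mul_pow, ← mul_assoc]
    exact mul_le_mul_of_nonneg_right (hE n) (by positivity)
  have := eval_eq_tsum_mul_eval_of_coe_eq_mk_mul E _ _ hred z hsum
  simp only [eval_mul, eval_X, eval_add, eval_C, eval_sub, sub_self, zero_mul, add_zero,
    mul_zero, mul_eq_zero, hz, false_or] at this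
  rcases this with h0 | h0
  · exact Nat.cast_add_one_ne_zero r h0
  · exact hgz (dvd_iff_isRoot.mpr h0)

theorem coeff_comp_neg_X {R : Type*} [CommRing R] (P : R[X]) (n : ℕ) :
    (P.comp (-X)).coeff n = (-1) ^ n * P.coeff n := by
  rw [show (-X : R[X]) = C (-1) * X by simp, comp_C_mul_X_coeff, mul_comm]

/-- A bound on the even-indexed coefficients of the logarithmic derivative suffices. -/
theorem one_le_mul_norm_of_isRoot_of_even_log_deriv_bound (P : ℂ[X]) (hP : P ≠ 0) (b : ℕ → ℂ)
    (h : ((X * derivative P : ℂ[X]) : PowerSeries ℂ) = PowerSeries.mk b * P)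
    (B R : ℝ) (hR : 0 ≤ R) (hb : ∀ n, ‖b (2 * n)‖ ≤ B * R ^ (2 * n)) (z : ℂ) (hz : z ≠ 0)
    (hroot : P.IsRoot z) : 1 ≤ R * ‖z‖ := by
  have hB : 0 ≤ B := by simpa using (norm_nonneg _).trans (hb 0)
  set P' : ℂ[X] := P.comp (-X) with hP'
  have hP'0 : P' ≠ 0 := by
    intro h0
    apply hP
    have := congrArg (fun q : ℂ[X] ↦ q.comp (-X)) h0
    simpa [hP', comp_assoc] using this
  have h' : ((X * derivative P' : ℂ[X]) : PowerSeries ℂ) =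
      PowerSeries.mk (fun n ↦ (-1) ^ n * b n) * P' := by
    ext n
    have hn := congrArg (PowerSeries.coeff n) h
    have hcoef : (X * derivative P').coeff n = (-1) ^ n * (X * derivative P).coeff n := by
      cases n with
      | zero => simp
      | succ n => simp [hP', coeff_X_mul, coeff_derivative, coeff_comp_neg_X]; ring
    rw [coeff_coe, PowerSeries.coeff_mul] at hn
    rw [coeff_coe, hcoef, hn, PowerSeries.coeff_mul, Finset.mul_sum]
    refine Finset.sum_congr rfl fun k hk ↦ ?_
    simp only [PowerSeries.coeff_mk, coeff_coe, hP', coeff_comp_neg_X]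
    rw [← Finset.HasAntidiagonal.mem_antidiagonal.mp hk, pow_add]
    ring
  refine one_le_mul_norm_of_isRoot_of_log_deriv_bound (P * P') (mul_ne_zero hP hP'0)
    (fun n ↦ b n + (-1) ^ n * b n) ?_ (2 * B) R hR (fun n ↦ ?_) z hz ?_
  · have hsplit : PowerSeries.mk (fun n ↦ b n + (-1) ^ n * b n) =
        PowerSeries.mk b + PowerSeries.mk fun n ↦ (-1) ^ n * b n := by ext; simp
    rw [derivative_mul, hsplit, show X * (derivative P * P' + P * derivative P') =
      X * derivative P * P' + P * (X * derivative P') by ring, coe_add, coe_mul,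
      coe_mul P (X * derivative P'), h, h', coe_mul]
    ring
  · rcases Nat.even_or_odd' n with ⟨k, rfl | rfl⟩
    · rw [pow_mul, neg_one_sq, one_pow, one_mul, ← two_mul, norm_mul, Complex.norm_ofNat,
        mul_assoc]
      exact mul_le_mul_of_nonneg_left (hb k) two_pos.le
    · rw [pow_add, pow_mul, neg_one_sq]
      simp only [one_pow, pow_one, one_mul, neg_mul, add_neg_cancel, norm_zero]
      positivity
  · rw [IsRoot.def, eval_mul, hroot.eq_zero, zero_mul]

theorem norm_coeff_one_le_of_roots (P : ℂ[X]) (h0 : P.coeff 0 = 1) (R : ℝ)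
    (hroot : ∀ z, P.IsRoot z → 1 ≤ R * ‖z‖) : ‖P.coeff 1‖ ≤ P.natDegree * R := by
  have hmonic : P.reverse.Monic := by
    rw [Monic, reverse_leadingCoeff, trailingCoeff, natTrailingDegree_eq_zero.mpr
      (Or.inr (by simp [h0])), h0]
  have hdeg : P.reverse.natDegree = P.natDegree := by
    rw [reverse_natDegree, natTrailingDegree_eq_zero.mpr (Or.inr (by simp [h0])), Nat.sub_zero]
  rcases Nat.eq_zero_or_pos P.natDegree with hd | hd
  · simp [hd, coeff_eq_zero_of_natDegree_lt (show P.natDegree < 1 by omega)]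
  have hsplit := IsAlgClosed.splits P.reverse
  have hnext : P.coeff 1 = -P.reverse.roots.sum := by
    rw [← hsplit.nextCoeff_eq_neg_sum_roots_of_monic hmonic,
      nextCoeff_of_natDegree_pos (by omega), hdeg, coeff_reverse, revAt_le (by omega)]
    congr 1
    omega
  rw [hnext, norm_neg]
  calc ‖P.reverse.roots.sum‖ ≤ (P.reverse.roots.map norm).sum := norm_multiset_sum_le _
    _ ≤ (P.reverse.roots.map norm).card • R := by
      refine Multiset.sum_le_card_nsmul _ _ fun x hx ↦ ?_
      obtain ⟨w, hw, rfl⟩ := Multiset.mem_map.mp hx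
      have hw' := (mem_roots hmonic.ne_zero).mp hw
      have hw0 : w ≠ 0 := by
        rintro rfl
        have : P.reverse.coeff 0 = 0 := by rw [coeff_zero_eq_eval_zero]; exact hw'
        rw [coeff_zero_reverse, leadingCoeff_eq_zero] at this
        simp [this] at h0
      have hinv := hroot w⁻¹ (by
        let := invertibleOfNonzero (inv_ne_zero hw0)
        have := eval₂_reverse_eq_zero_iff (RingHom.id ℂ) w⁻¹ P
        simpa [eval₂_id, IsRoot] using this.mp (by simpa [eval₂_id] using hw'))
      rw [norm_inv, ← div_eq_mul_inv, one_le_div (norm_pos_iff.mpr hw0)] at hinv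
      exact hinv
    _ = P.natDegree * R := by
      rw [Multiset.card_map, nsmul_eq_mul, ← hsplit.natDegree_eq_card_roots, hdeg]

/-- Abstract form of the passage from square-root cancellation over all even extensions to a sharp
bound on the first coefficient of an `L`-polynomial. -/
theorem abs_one_le_of_newton_identity (a b : ℕ → ℤ) (m : ℕ) (h0 : a 0 = 1)
    (ha : ∀ n, m ≤ n → a n = 0)
    (hab : ∀ n : ℕ, (n : ℤ) * a n = ∑ k ∈ Finset.HasAntidiagonal.antidiagonal n, b k.1 * a k.2)
    (B R : ℝ) (hR : 0 ≤ R) (hb : ∀ n, |(b (2 * n) : ℝ)| ≤ B * R ^ (2 * n)) :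
    |(a 1 : ℝ)| ≤ ((m : ℝ) - 1) * R := by
  have hm : 1 ≤ m := by
    by_contra! hm
    simpa [h0] using ha 0 (by omega)
  set P : ℂ[X] := ∑ n ∈ Finset.range m, C (a n : ℂ) * X ^ n with hPdef
  have hcoeff (n : ℕ) : P.coeff n = a n := by
    simp only [hPdef, finsetSum_coeff, coeff_C_mul, coeff_X_pow, mul_ite, mul_one, mul_zero,
      Finset.sum_ite_eq, Finset.mem_range]
    split_ifs with hn
    · rfl
    · simp [ha n (by omega)]
  have hP : P ≠ 0 := fun h ↦ by simpa [h, h0] using hcoeff 0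
  have hdeg : P.natDegree ≤ m - 1 := by
    refine natDegree_le_iff_coeff_eq_zero.mpr fun n hn ↦ ?_
    simp [hcoeff, ha n (by omega)]
  have hlog : ((X * derivative P : ℂ[X]) : PowerSeries ℂ) =
      PowerSeries.mk (fun n ↦ (b n : ℂ)) * P := by
    ext n
    have hn : ((n : ℤ) * a n : ℂ) =
        ∑ k ∈ Finset.HasAntidiagonal.antidiagonal n, (b k.1 : ℂ) * a k.2 := by
      exact_mod_cast hab n
    have hc : (X * derivative P).coeff n = (n : ℂ) * a n := by
      cases n with
      | zero => simp
      | succ n => simp [coeff_X_mul, coeff_derivative, hcoeff]; ring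
    rw [coeff_coe, hc, PowerSeries.coeff_mul]
    simpa [hcoeff] using hn
  have hroot (z : ℂ) (hz : P.IsRoot z) : 1 ≤ R * ‖z‖ := by
    have hz0 : z ≠ 0 := by
      rintro rfl
      have : P.coeff 0 = 0 := by rw [coeff_zero_eq_eval_zero]; exact hz
      simp [hcoeff, h0] at this
    refine one_le_mul_norm_of_isRoot_of_even_log_deriv_bound P hP _ hlog B R hR (fun n ↦ ?_) z
      hz0 hz
    simpa using hb n
  have := norm_coeff_one_le_of_roots P (by simp [hcoeff, h0]) R hroot
  rw [hcoeff] at this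
  have hcast : ((m - 1 : ℕ) : ℝ) = (m : ℝ) - 1 := by push_cast [hm]; ring
  calc |(a 1 : ℝ)| = ‖(a 1 : ℂ)‖ := by simp
    _ ≤ P.natDegree * R := this
    _ ≤ ((m - 1 : ℕ) : ℝ) * R := by gcongr
    _ = _ := by rw [hcast]

theorem finite_setOf_monic_natDegree_eq (F : Type*) [Field F] [Finite F] (n : ℕ) :
    {h : F[X] | h.Monic ∧ h.natDegree = n}.Finite := by
  have : Finite (degreeLT F (n + 1)) := Module.finite_of_finite F
  refine Set.Finite.subset (Set.toFinite (degreeLT F (n + 1) : Set F[X])) ?_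
  rintro h ⟨-, rfl⟩
  rw [SetLike.mem_coe, mem_degreeLT]
  exact degree_le_natDegree.trans_lt (by exact_mod_cast Nat.lt_succ_self _)

/-- The monic polynomials of degree `n` over a finite field. -/
noncomputable def monicsOfDegree (F : Type*) [Field F] [Finite F] (n : ℕ) : Finset F[X] :=
  (finite_setOf_monic_natDegree_eq F n).toFinset

theorem mem_monicsOfDegree {F : Type*} [Field F] [Finite F] {n : ℕ} {h : F[X]} :
    h ∈ monicsOfDegree F n ↔ h.Monic ∧ h.natDegree = n := by
  simp [monicsOfDegree]

open Classical in
/-- The monic irreducible polynomials of degree at most `n` over a finite field. -/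
noncomputable def monicIrreducibles (F : Type*) [Field F] [Finite F] (n : ℕ) : Finset F[X] :=
  ((Finset.range (n + 1)).biUnion (monicsOfDegree F)).filter Irreducible

theorem mem_monicIrreducibles {F : Type*} [Field F] [Finite F] {n : ℕ} {P : F[X]} :
    P ∈ monicIrreducibles F n ↔ P.Monic ∧ Irreducible P ∧ P.natDegree ≤ n := by
  simp only [monicIrreducibles, Finset.mem_filter, Finset.mem_biUnion, Finset.mem_range,
    mem_monicsOfDegree]
  constructor
  · rintro ⟨⟨d, hd, hP, rfl⟩, hirr⟩
    exact ⟨hP, hirr, by omega⟩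
  · rintro ⟨hP, hirr, hd⟩
    exact ⟨⟨_, by omega, hP, rfl⟩, hirr⟩

/-- The coefficients of the `L`-series of a multiplicative function on polynomials. -/
noncomputable def lCoeff {F : Type*} [Field F] [Finite F] (ψ : F[X] →* ℤ) (n : ℕ) : ℤ :=
  ∑ h ∈ monicsOfDegree F n, ψ h

/-- The coefficients of the logarithmic derivative of the `L`-series of a multiplicative function
on polynomials. -/
noncomputable def logDerivCoeff {F : Type*} [Field F] [Finite F] (ψ : F[X] →* ℤ) (n : ℕ) : ℤ :=
  ∑ P ∈ monicIrreducibles F n,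
    if P.natDegree ∣ n then (P.natDegree : ℤ) * ψ P ^ (n / P.natDegree) else 0

section Newton

variable {F : Type*} [Field F] [Finite F]

open Classical in
theorem natDegree_eq_sum_irreducible_pow_dvd {n : ℕ} {h : F[X]} (hh : h ∈ monicsOfDegree F n) :
    n = ∑ P ∈ monicIrreducibles F n, ∑ k ∈ Finset.Icc 1 n,
      if P ^ k ∣ h then P.natDegree else 0 := by
  obtain ⟨hmonic, rfl⟩ := mem_monicsOfDegree.mp hh
  have h0 := hmonic.ne_zero
  set s := UniqueFactorizationMonoid.normalizedFactors h with hs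
  have hsmonic (P : F[X]) (hP : P ∈ s) : P.Monic := by
    have h1 := UniqueFactorizationMonoid.normalize_normalized_factor P hP
    rw [← h1]
    exact monic_normalize (UniqueFactorizationMonoid.irreducible_of_normalized_factor P hP).ne_zero
  have hprod : s.prod = h := by
    exact eq_of_monic_of_associated
      (by simpa using monic_multiset_prod_of_monic s id hsmonic) hmonic
      (UniqueFactorizationMonoid.prod_normalizedFactors h0)
  have hdeg : h.natDegree = ∑ P ∈ s.toFinset, s.count P * P.natDegree := by
    conv_lhs => rw [← hprod, natDegree_multiset_prod_of_monic _ hsmonic,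
      Finset.sum_multiset_map_count]
    simp
  have hsub : s.toFinset ⊆ monicIrreducibles F h.natDegree := by
    intro P hP
    rw [Multiset.mem_toFinset] at hP
    exact mem_monicIrreducibles.mpr ⟨hsmonic P hP,
      UniqueFactorizationMonoid.irreducible_of_normalized_factor P hP,
      natDegree_le_of_dvd (UniqueFactorizationMonoid.dvd_of_mem_normalizedFactors hP) h0⟩
  conv_lhs => rw [hdeg]
  rw [Finset.sum_subset hsub fun P _ hP ↦ by
    rw [Multiset.count_eq_zero_of_notMem (by simpa using hP), zero_mul]]
  refine Finset.sum_congr rfl fun P hP ↦ ?_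
  obtain ⟨hPm, hPi, -⟩ := mem_monicIrreducibles.mp hP
  have hdvd (k : ℕ) : P ^ k ∣ h ↔ k ≤ s.count P := by
    rw [pow_dvd_iff_le_emultiplicity,
      UniqueFactorizationMonoid.emultiplicity_eq_count_normalizedFactors hPi h0,
      hPm.normalize_eq_self, Nat.cast_le]
  have hle : s.count P ≤ h.natDegree := by
    have h1 := natDegree_le_of_dvd ((hdvd _).mpr le_rfl) h0
    rw [natDegree_pow] at h1
    exact (Nat.le_mul_of_pos_right _ hPi.natDegree_pos).trans h1
  rw [← Finset.sum_filter, Finset.sum_const, smul_eq_mul]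
  congr 1
  rw [show (Finset.Icc 1 h.natDegree).filter (fun k ↦ P ^ k ∣ h) = Finset.Icc 1 (s.count P) by
    ext k
    simp only [Finset.mem_filter, Finset.mem_Icc, hdvd]
    omega]
  simp

open Classical in
theorem sum_monicsOfDegree_dvd (ψ : F[X] →* ℤ) {g : F[X]} (hg : g.Monic) (n : ℕ) :
    (∑ h ∈ monicsOfDegree F n, if g ∣ h then ψ h else 0) =
      if g.natDegree ≤ n then ψ g * lCoeff ψ (n - g.natDegree) else 0 := by
  split_ifs with hn
  · rw [lCoeff, Finset.mul_sum, ← Finset.sum_filter]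
    symm
    refine Finset.sum_bij (fun u _ ↦ g * u) (fun u hu ↦ ?_) (fun u _ v _ huv ↦ ?_)
      (fun h hh ↦ ?_) (fun u _ ↦ (map_mul ψ g u).symm)
    · obtain ⟨hu, hd⟩ := mem_monicsOfDegree.mp hu
      refine Finset.mem_filter.mpr ⟨mem_monicsOfDegree.mpr ⟨hg.mul hu, ?_⟩, dvd_mul_right _ _⟩
      rw [hg.natDegree_mul hu]
      omega
    · exact mul_left_cancel₀ hg.ne_zero huv
    · obtain ⟨hh, u, rfl⟩ := Finset.mem_filter.mp hh
      obtain ⟨hm, hd⟩ := mem_monicsOfDegree.mp hh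
      have hu := hg.of_mul_monic_left hm
      rw [hg.natDegree_mul hu] at hd
      exact ⟨u, mem_monicsOfDegree.mpr ⟨hu, by omega⟩, rfl⟩
  · refine Finset.sum_eq_zero fun h hh ↦ if_neg fun hdvd ↦ hn ?_
    obtain ⟨hm, rfl⟩ := mem_monicsOfDegree.mp hh
    exact natDegree_le_of_dvd hdvd hm.ne_zero

theorem logDerivCoeff_eq_sum_pow (ψ : F[X] →* ℤ) {j n : ℕ} (hj : j ≤ n) :
    logDerivCoeff ψ j = ∑ P ∈ monicIrreducibles F n, ∑ k ∈ Finset.Icc 1 n,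
      if k * P.natDegree = j then (P.natDegree : ℤ) * ψ P ^ k else 0 := by
  have hsub : monicIrreducibles F j ⊆ monicIrreducibles F n := fun P hP ↦ by
    rw [mem_monicIrreducibles] at hP ⊢
    exact ⟨hP.1, hP.2.1, hP.2.2.trans hj⟩
  have hzero (P : F[X]) (hPj : ¬(P.natDegree ≤ j ∧ P.natDegree ∣ j)) :
      (∑ k ∈ Finset.Icc 1 n,
        if k * P.natDegree = j then (P.natDegree : ℤ) * ψ P ^ k else 0) = 0 := by
    refine Finset.sum_eq_zero fun k hk ↦ if_neg ?_
    rintro rfl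
    exact hPj ⟨Nat.le_mul_of_pos_left _ (Finset.mem_Icc.mp hk).1, dvd_mul_left _ _⟩
  rw [logDerivCoeff, ← Finset.sum_subset hsub fun P hP hPj ↦ hzero P fun h ↦ hPj ?_]
  · refine Finset.sum_congr rfl fun P hP ↦ ?_
    obtain ⟨-, hPi, hPj⟩ := mem_monicIrreducibles.mp hP
    have hpos := hPi.natDegree_pos
    split_ifs with hd
    · obtain ⟨k, rfl⟩ := hd
      rw [Nat.mul_div_cancel_left _ hpos, Finset.sum_eq_single k]
      · rw [if_pos (mul_comm _ _)]
      · intro l _ hl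
        rw [if_neg fun h ↦ hl (Nat.eq_of_mul_eq_mul_left hpos (by rw [← h, mul_comm]))]
      · intro hk
        refine absurd (Finset.mem_Icc.mpr ⟨Nat.pos_of_ne_zero ?_, ?_⟩) hk
        · rintro rfl
          omega
        · exact (Nat.le_mul_of_pos_left _ hpos).trans hj
    · exact (hzero P fun h ↦ hd h.2).symm
  · obtain ⟨h1, h2, -⟩ := mem_monicIrreducibles.mp hP
    exact mem_monicIrreducibles.mpr ⟨h1, h2, h.1⟩

theorem natCast_mul_lCoeff (ψ : F[X] →* ℤ) (n : ℕ) :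
    (n : ℤ) * lCoeff ψ n = ∑ k ∈ Finset.HasAntidiagonal.antidiagonal n,
      logDerivCoeff ψ k.1 * lCoeff ψ k.2 := by
  classical
  trans ∑ P ∈ monicIrreducibles F n, ∑ k ∈ Finset.Icc 1 n,
    if k * P.natDegree ≤ n then
      (P.natDegree : ℤ) * ψ P ^ k * lCoeff ψ (n - k * P.natDegree) else 0
  · calc (n : ℤ) * lCoeff ψ n
        = ∑ h ∈ monicsOfDegree F n, ∑ P ∈ monicIrreducibles F n, ∑ k ∈ Finset.Icc 1 n,
            (P.natDegree : ℤ) * if P ^ k ∣ h then ψ h else 0 := by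
          rw [lCoeff, Finset.mul_sum]
          refine Finset.sum_congr rfl fun h hh ↦ ?_
          conv_lhs => rw [natDegree_eq_sum_irreducible_pow_dvd hh]
          push_cast
          simp only [Finset.sum_mul]
          refine Finset.sum_congr rfl fun P _ ↦ Finset.sum_congr rfl fun k _ ↦ ?_
          split_ifs <;> simp
      _ = ∑ P ∈ monicIrreducibles F n, ∑ k ∈ Finset.Icc 1 n,
            (P.natDegree : ℤ) * ∑ h ∈ monicsOfDegree F n, if P ^ k ∣ h then ψ h else 0 := by
          rw [Finset.sum_comm]
          refine Finset.sum_congr rfl fun P _ ↦ ?_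
          rw [Finset.sum_comm]
          simp only [Finset.mul_sum]
      _ = _ := by
          refine Finset.sum_congr rfl fun P hP ↦ Finset.sum_congr rfl fun k _ ↦ ?_
          have hPm := (mem_monicIrreducibles.mp hP).1
          rw [sum_monicsOfDegree_dvd ψ (hPm.pow k), natDegree_pow, map_pow]
          split_ifs
          · ring
          · simp
  · rw [Finset.Nat.sum_antidiagonal_eq_sum_range_succ fun i j ↦ logDerivCoeff ψ i * lCoeff ψ j]
    have hexp (j : ℕ) (hj : j ∈ Finset.range n.succ) :
        logDerivCoeff ψ j * lCoeff ψ (n - j) =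
          ∑ P ∈ monicIrreducibles F n, ∑ k ∈ Finset.Icc 1 n,
            if k * P.natDegree = j then
              (P.natDegree : ℤ) * ψ P ^ k * lCoeff ψ (n - j) else 0 := by
      rw [logDerivCoeff_eq_sum_pow ψ (Nat.lt_succ_iff.mp (Finset.mem_range.mp hj)),
        Finset.sum_mul]
      simp only [Finset.sum_mul, ite_mul, zero_mul]
    refine Eq.symm ((Finset.sum_congr rfl hexp).trans ?_)
    rw [Finset.sum_comm]
    refine Finset.sum_congr rfl fun P _ ↦ ?_
    rw [Finset.sum_comm]
    refine Finset.sum_congr rfl fun k _ ↦ ?_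
    rw [Finset.sum_ite_eq]
    simp

end Newton

theorem norm_algebraMap_sub {F K : Type*} [Field F] [Field K] [Algebra F K]
    [FiniteDimensional F K] (a : F) (x : K) :
    Algebra.norm F (algebraMap F K a - x) =
      (minpoly F x).eval a ^ (Module.finrank F K / (minpoly F x).natDegree) := by
  have hx : IsIntegral F x := Algebra.IsIntegral.isIntegral x
  let pb := IntermediateField.adjoin.powerBasis hx
  have hgen : Algebra.norm F (algebraMap F _ a - pb.gen) = (minpoly F x).eval a := by
    have h1 := charpoly_leftMulMatrix pb
    rw [IntermediateField.adjoin.powerBasis_gen, IntermediateField.minpoly_gen] at h1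
    rw [Algebra.norm_eq_matrix_det pb.basis, ← h1, Matrix.eval_charpoly, map_sub]
    congr 2
    ext i j
    simp [Algebra.algebraMap_eq_smul_one, Matrix.one_apply, Matrix.diagonal_apply]
  have hmap : algebraMap F K a - x = algebraMap _ K (algebraMap F _ a - pb.gen) := by
    rw [map_sub, ← IsScalarTower.algebraMap_apply, IntermediateField.adjoin.powerBasis_gen,
      IntermediateField.AdjoinSimple.algebraMap_gen]
  have hdeg := Module.finrank_mul_finrank F (IntermediateField.adjoin F {x}) K
  rw [IntermediateField.adjoin.finrank hx] at hdeg
  rw [hmap, ← Algebra.norm_norm (S := IntermediateField.adjoin F {x}), Algebra.norm_algebraMap,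
    map_pow, hgen, ← hdeg, Nat.mul_div_cancel_left _ (minpoly.natDegree_pos hx)]

theorem quadraticChar_eq_quadraticChar_norm {F K : Type*} [Field F] [Fintype F] [DecidableEq F]
    [Field K] [Fintype K] [DecidableEq K] [Algebra F K] (hF : ringChar F ≠ 2) (y : K) :
    quadraticChar K y = quadraticChar F (Algebra.norm F y) := by
  have hK : ringChar K ≠ 2 := by
    rwa [← Algebra.ringChar_eq F K]
  refine Int.cast_injOn_of_ringChar_ne_two hK (quadraticChar_isQuadratic K y)
    (quadraticChar_isQuadratic F _) ?_
  have h1 := congrArg (algebraMap F K)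
    (quadraticChar_eq_pow_of_char_ne_two' hF (Algebra.norm F y))
  rw [map_intCast, map_pow, FiniteField.algebraMap_norm_eq_pow, ← pow_mul] at h1
  rw [h1, quadraticChar_eq_pow_of_char_ne_two' hK]
  congr 1
  have hFodd := FiniteField.odd_card_of_char_ne_two hF
  have hKodd := FiniteField.odd_card_of_char_ne_two hK
  simp only [Nat.card_eq_fintype_card]
  have hdvd : Fintype.card F - 1 ∣ Fintype.card K - 1 := by
    rw [Module.card_eq_pow_finrank (K := F) (V := K)]
    simpa using Nat.sub_dvd_pow_sub_pow (Fintype.card F) 1 (Module.finrank F K)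
  obtain ⟨t, ht⟩ := hdvd
  have hF1 : 1 < Fintype.card F := Fintype.one_lt_card
  rw [ht, Nat.mul_div_cancel_left _ (by omega)]
  obtain ⟨c, hc⟩ : ∃ c, Fintype.card F = 2 * c + 1 := ⟨Fintype.card F / 2, by omega⟩
  have hcK : Fintype.card K = 2 * (c * t) + 1 := by
    rw [hc, Nat.add_sub_cancel, mul_assoc] at ht
    have : 0 < Fintype.card K := Fintype.card_pos
    omega
  rw [hcK, hc, show (2 * (c * t) + 1) / 2 = c * t by omega, show (2 * c + 1) / 2 = c by omega,
    mul_comm]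

theorem card_minpoly_eq {F K : Type*} [Field F] [Finite F] [Field K] [Fintype K] [Algebra F K]
    [DecidableEq F[X]] {P : F[X]} (hP : P.Monic) (hirr : Irreducible P)
    (hdvd : P.natDegree ∣ Module.finrank F K) :
    (Finset.univ.filter fun x : K ↦ minpoly F x = P).card = P.natDegree := by
  classical
  have hdvd' := hirr.natDegree_dvd_iff_dvd_X_pow_card_pow_sub_X.mp hdvd
  rw [← Module.natCard_eq_pow_finrank] at hdvd'
  have hsplit : (P.map (algebraMap F K)).Splits := by
    refine Splits.of_dvd (splits_X_pow_nat_card_sub_X (K := K)) ?_ ?_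
    · exact FiniteField.X_pow_card_sub_X_ne_zero K Finite.one_lt_card
    · simpa using Polynomial.map_dvd (algebraMap F K) hdvd'
  have hsep : (P.map (algebraMap F K)).Separable :=
    (PerfectField.separable_of_irreducible hirr).map
  have hset : (Finset.univ.filter fun x : K ↦ minpoly F x = P) =
      (P.map (algebraMap F K)).roots.toFinset := by
    ext x
    simp only [Finset.mem_filter, Finset.mem_univ, true_and, Multiset.mem_toFinset,
      mem_roots (hP.map (algebraMap F K)).ne_zero, IsRoot.def, eval_map_algebraMap]
    constructor
    · rintro rfl
      exact minpoly.aeval F x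
    · intro hx
      exact (minpoly.eq_of_irreducible_of_monic hirr hx hP).symm
  rw [hset, Multiset.toFinset_card_of_nodup (nodup_roots hsep), ← hsplit.natDegree_eq_card_roots,
    natDegree_map]

/-- The multiplicative function `h ↦ χ (∏ a ∈ A, h a)` on polynomials. -/
noncomputable def evalChar {F : Type*} [Field F] [Fintype F] [DecidableEq F] (A : Finset F) :
    F[X] →* ℤ where
  toFun h := ∏ a ∈ A, quadraticChar F (h.eval a)
  map_one' := by simp
  map_mul' g h := by simp only [eval_mul, map_mul, Finset.prod_mul_distrib]

theorem evalChar_apply {F : Type*} [Field F] [Fintype F] [DecidableEq F] (A : Finset F)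
    (h : F[X]) : evalChar A h = ∏ a ∈ A, quadraticChar F (h.eval a) := rfl

theorem logDerivCoeff_evalChar {F K : Type*} [Field F] [Fintype F] [DecidableEq F]
    [Field K] [Fintype K] [DecidableEq K] [Algebra F K] (hF : ringChar F ≠ 2) (A : Finset F) :
    logDerivCoeff (evalChar A) (Module.finrank F K) =
      ∑ x : K, ∏ a ∈ A, quadraticChar K (algebraMap F K a - x) := by
  classical
  have hval (x : K) : ∏ a ∈ A, quadraticChar K (algebraMap F K a - x) =
      evalChar A (minpoly F x) ^ (Module.finrank F K / (minpoly F x).natDegree) := by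
    rw [evalChar_apply, ← Finset.prod_pow]
    refine Finset.prod_congr rfl fun a _ ↦ ?_
    rw [quadraticChar_eq_quadraticChar_norm hF, norm_algebraMap_sub, map_pow]
  have hintegral (x : K) : IsIntegral F x := Algebra.IsIntegral.isIntegral x
  rw [logDerivCoeff, ← Finset.sum_fiberwise_of_maps_to (s := Finset.univ)
    (t := monicIrreducibles F (Module.finrank F K)) (g := fun x : K ↦ minpoly F x) fun x _ ↦
      mem_monicIrreducibles.mpr ⟨minpoly.monic (hintegral x), minpoly.irreducible (hintegral x),
        minpoly.natDegree_le x⟩]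
  refine Finset.sum_congr rfl fun P hP ↦ ?_
  obtain ⟨hPm, hPi, -⟩ := mem_monicIrreducibles.mp hP
  split_ifs with hd
  · rw [Finset.sum_congr rfl fun x hx ↦ by
      rw [hval x, (Finset.mem_filter.mp hx).2], Finset.sum_const, card_minpoly_eq hPm hPi hd,
      nsmul_eq_mul]
  · symm
    refine Finset.sum_eq_zero fun x hx ↦ absurd ?_ hd
    rw [← (Finset.mem_filter.mp hx).2, ← IntermediateField.adjoin.finrank (hintegral x)]
    exact Dvd.intro _ (Module.finrank_mul_finrank F (IntermediateField.adjoin F {x}) K)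

theorem lCoeff_evalChar_eq_zero {F : Type*} [Field F] [Fintype F] [DecidableEq F]
    (hF : ringChar F ≠ 2) (A : Finset F) (hA : A.Nonempty) {n : ℕ} (hn : A.card ≤ n) :
    lCoeff (evalChar A) n = 0 := by
  obtain ⟨a₀, ha₀⟩ := hA
  obtain ⟨ν, hν⟩ := quadraticChar_exists_neg_one hF
  have hν0 : ν ≠ 0 := by
    rintro rfl
    simp at hν
  set ℓ : F[X] := Lagrange.basis A id a₀ with hℓ
  have hinj : Set.InjOn (id : F → F) A := Set.injOn_id _
  have hℓ₀ : ℓ.eval a₀ = 1 := Lagrange.eval_basis_self hinj ha₀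
  have hℓne (a : F) (ha : a ∈ A) (hne : a ≠ a₀) : ℓ.eval a = 0 :=
    Lagrange.eval_basis_of_ne (v := id) hne.symm ha
  have hℓdeg : ℓ.degree < n := by
    rw [hℓ, Lagrange.degree_basis hinj ha₀]
    have := Finset.card_pos.mpr ⟨a₀, ha₀⟩
    exact_mod_cast (by omega : A.card - 1 < n)
  let T : F[X] → F[X] := fun h ↦ h + C ((ν - 1) * h.eval a₀) * ℓ
  have hT₀ (h : F[X]) : (T h).eval a₀ = ν * h.eval a₀ := by
    simp only [T, eval_add, eval_mul, eval_C, hℓ₀]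
    ring
  have hTmem (h : F[X]) (hh : h ∈ monicsOfDegree F n) : T h ∈ monicsOfDegree F n := by
    obtain ⟨hm, hd⟩ := mem_monicsOfDegree.mp hh
    have hlt : (C ((ν - 1) * h.eval a₀) * ℓ).degree < h.degree := by
      rw [degree_eq_natDegree hm.ne_zero, hd]
      rw [← smul_eq_C_mul]
      exact (degree_smul_le _ _).trans_lt hℓdeg
    refine mem_monicsOfDegree.mpr ⟨hm.add_of_left hlt, ?_⟩
    rw [natDegree_add_eq_left_of_degree_lt hlt, hd]
  have hTinj : Function.Injective T := by
    intro g h hgh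
    have h1 := congrArg (eval a₀) hgh
    rw [hT₀, hT₀] at h1
    have h2 : g.eval a₀ = h.eval a₀ := mul_left_cancel₀ hν0 h1
    simpa [T, h2] using hgh
  have hTψ (h : F[X]) : evalChar A (T h) = -evalChar A h := by
    rw [evalChar_apply, evalChar_apply, ← Finset.mul_prod_erase A _ ha₀,
      ← Finset.mul_prod_erase A _ ha₀, hT₀, map_mul, hν]
    rw [Finset.prod_congr rfl fun a ha ↦ by
      rw [show (T h).eval a = h.eval a by
        simp [T, hℓne a (Finset.mem_of_mem_erase ha) (Finset.ne_of_mem_erase ha)]]]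
    ring
  have hneg : lCoeff (evalChar A) n = -lCoeff (evalChar A) n := by
    conv_lhs => rw [lCoeff]
    rw [lCoeff, ← Finset.sum_neg_distrib]
    symm
    refine Finset.sum_bij (fun h _ ↦ T h) hTmem (fun g _ h _ hgh ↦ hTinj hgh) ?_
      (fun h _ ↦ (hTψ h).symm)
    exact fun h hh ↦ by
      obtain ⟨g, hg, rfl⟩ := Finset.surj_on_of_inj_on_of_card_le (fun g _ ↦ T g) hTmem
        (fun g h _ _ hgh ↦ hTinj hgh) le_rfl h hh
      exact ⟨g, hg, rfl⟩
  omega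

theorem lCoeff_zero {F : Type*} [Field F] [Finite F] (ψ : F[X] →* ℤ) : lCoeff ψ 0 = 1 := by
  have : monicsOfDegree F 0 = {1} := by
    ext h
    rw [mem_monicsOfDegree, Finset.mem_singleton]
    constructor
    · rintro ⟨hm, hd⟩
      exact hm.natDegree_eq_zero.mp hd
    · rintro rfl
      exact ⟨monic_one, natDegree_one⟩
  simp [lCoeff, this]

theorem lCoeff_evalChar_one {F : Type*} [Field F] [Fintype F] [DecidableEq F] (A : Finset F) :
    lCoeff (evalChar A) 1 = ∑ c : F, ∏ a ∈ A, quadraticChar F (c + a) := by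
  symm
  refine Finset.sum_bij (fun c _ ↦ X + C c) (fun c _ ↦ ?_) (fun c _ d _ h ↦ ?_) (fun h hh ↦ ?_)
    (fun c _ ↦ ?_)
  · exact mem_monicsOfDegree.mpr ⟨monic_X_add_C c, natDegree_X_add_C c⟩
  · simpa using h
  · obtain ⟨hm, hd⟩ := mem_monicsOfDegree.mp hh
    exact ⟨h.coeff 0, Finset.mem_univ _, (hm.eq_X_add_C hd).symm⟩
  · simp [evalChar_apply, add_comm]

theorem abs_sum_prod_quadraticChar_le_of_odd {p : ℕ} [Fact p.Prime] (hp : p ≠ 2)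
    (A : Finset (ZMod p)) (hA : Odd A.card) :
    |((∑ c, ∏ a ∈ A, quadraticChar (ZMod p) (c + a) : ℤ) : ℝ)| ≤ ((A.card : ℝ) - 1) * √p := by
  classical
  have hF : ringChar (ZMod p) ≠ 2 := by rwa [ZMod.ringChar_zmod_n]
  rw [← lCoeff_evalChar_one]
  refine abs_one_le_of_newton_identity (lCoeff (evalChar A)) (logDerivCoeff (evalChar A)) A.card
    (lCoeff_zero _) (fun n hn ↦ lCoeff_evalChar_eq_zero hF A (Finset.card_pos.mp hA.pos) hn)
    (natCast_mul_lCoeff _) (4 * A.card + 4) (√p) (Real.sqrt_nonneg _) fun n ↦ ?_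
  rcases eq_or_ne n 0 with rfl | hn
  · have hempty : monicIrreducibles (ZMod p) 0 = ∅ :=
      Finset.eq_empty_of_forall_notMem fun P hP ↦ by
        obtain ⟨-, hPi, hP0⟩ := mem_monicIrreducibles.mp hP
        exact hPi.natDegree_pos.ne' (Nat.le_zero.mp hP0)
    simp [logDerivCoeff, hempty]
    positivity
  · let K := GaloisField p (2 * n)
    have : Fintype K := Fintype.ofFinite K
    have hn2 : 2 * n ≠ 0 := by omega
    have hcard : Fintype.card K = (p ^ n) ^ 2 := by
      rw [← Nat.card_eq_fintype_card, GaloisField.card p _ hn2, ← pow_mul, mul_comm]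
    have h1 := logDerivCoeff_evalChar (K := K) hF A
    rw [GaloisField.finrank p hn2] at h1
    let f : K[X] := ∏ a ∈ A, (X - C (algebraMap (ZMod p) K a))
    have hf : f.Monic := monic_prod_of_monic _ _ fun a _ ↦ monic_X_sub_C _
    have hdeg : f.natDegree = A.card := by
      simp [f, natDegree_prod_of_monic _ _ fun a _ ↦ monic_X_sub_C (algebraMap (ZMod p) K a)]
    have hval (x : K) : ∏ a ∈ A, quadraticChar K (algebraMap (ZMod p) K a - x) =
        quadraticChar K (-1) * quadraticChar K (f.eval x) := by
      rw [← map_prod, ← map_mul, eval_prod]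
      congr 1
      rw [show (-1 : K) = (-1) ^ A.card from hA.neg_one_pow.symm, ← Finset.prod_const,
        ← Finset.prod_mul_distrib]
      exact Finset.prod_congr rfl fun a _ ↦ by simp only [eval_sub, eval_X, eval_C]; ring
    have h2 := abs_sum_quadraticChar_eval_le p n hp hcard f hf (hdeg ▸ hA)
    rw [hdeg] at h2
    have h3 : |logDerivCoeff (evalChar A) (2 * n)| ≤ (4 * A.card + 4) * (p : ℤ) ^ n := by
      rw [h1, Finset.sum_congr rfl fun x _ ↦ hval x, ← Finset.mul_sum, abs_mul]
      rcases quadraticChar_dichotomy (F := K) (a := -1) (by simp) with h | h <;> simpa [h] using h2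
    rw [pow_mul, Real.sq_sqrt (Nat.cast_nonneg p)]
    exact_mod_cast h3

theorem abs_prod_quadraticChar_le_one {F ι : Type*} [Field F] [Fintype F] [DecidableEq F]
    (s : Finset ι) (g : ι → F) : |∏ t ∈ s, quadraticChar F (g t)| ≤ 1 := by
  rw [← map_prod]
  rcases quadraticChar_isQuadratic F (∏ t ∈ s, g t) with h | h | h <;> simp [h]

theorem sum_prod_quadraticChar_eq_of_even {F : Type*} [Field F] [Fintype F] [DecidableEq F]
    {A : Finset F} {a₀ : F} (ha₀ : a₀ ∈ A) (hA : Even A.card) :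
    ∑ c, ∏ a ∈ A, quadraticChar F (c + a) =
      (∏ a ∈ A.erase a₀, quadraticChar F (a - a₀)) *
        ((∑ c, ∏ b ∈ (A.erase a₀).image fun a ↦ (a - a₀)⁻¹, quadraticChar F (c + b)) -
          ∏ b ∈ (A.erase a₀).image fun a ↦ (a - a₀)⁻¹, quadraticChar F b) := by
  have hinj : Set.InjOn (fun a ↦ (a - a₀)⁻¹) (A.erase a₀ : Finset F) := fun a _ b _ hab ↦ by
    simpa using hab
  simp only [Finset.prod_image hinj]
  have hterm (c : F) : ∏ a ∈ A, quadraticChar F (c - a₀ + a) =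
      (∏ a ∈ A.erase a₀, quadraticChar F (a - a₀)) *
        ((∏ a ∈ A.erase a₀, quadraticChar F (c⁻¹ + (a - a₀)⁻¹)) -
          if c = 0 then ∏ a ∈ A.erase a₀, quadraticChar F ((a - a₀)⁻¹) else 0) := by
    rw [← Finset.mul_prod_erase A _ ha₀, sub_add_cancel]
    split_ifs with hc
    · simp [hc]
    · rw [sub_zero, ← Finset.prod_mul_distrib]
      have hodd : Odd (A.erase a₀).card := by
        rw [Finset.card_erase_of_mem ha₀]
        exact Nat.Even.sub_odd (Finset.card_pos.mpr ⟨a₀, ha₀⟩) hA odd_one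
      have hχ : quadraticChar F c = ∏ a ∈ A.erase a₀, quadraticChar F c := by
        obtain ⟨k, hk⟩ := hodd
        rw [Finset.prod_const, hk, pow_succ, pow_mul, quadraticChar_sq_one hc, one_pow, one_mul]
      conv_lhs => rw [hχ]
      rw [← Finset.prod_mul_distrib]
      refine Finset.prod_congr rfl fun a ha ↦ ?_
      have hne : a - a₀ ≠ 0 := sub_ne_zero.mpr (Finset.ne_of_mem_erase ha)
      rw [← map_mul, ← map_mul, show c * (c - a₀ + a) =
        (a - a₀) * (c⁻¹ + (a - a₀)⁻¹) * c ^ 2 by field_simp; ring, map_mul _ _ (c ^ 2),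
        quadraticChar_sq_one' hc, mul_one]
  rw [← Equiv.sum_comp (Equiv.subRight a₀)]
  simp only [Equiv.subRight_apply, hterm]
  have hinv : ∑ c : F, ∏ a ∈ A.erase a₀, quadraticChar F (c⁻¹ + (a - a₀)⁻¹) =
      ∑ c : F, ∏ a ∈ A.erase a₀, quadraticChar F (c + (a - a₀)⁻¹) :=
    Equiv.sum_comp (Equiv.inv F) fun c ↦ ∏ a ∈ A.erase a₀, quadraticChar F (c + (a - a₀)⁻¹)
  rw [← Finset.mul_sum, Finset.sum_sub_distrib, hinv]
  simp

theorem abs_sum_prod_quadraticChar_le_of_even {p : ℕ} [Fact p.Prime] (hp : p ≠ 2)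
    (A : Finset (ZMod p)) (hA : Even A.card) (hne : A.Nonempty) :
    |((∑ c, ∏ a ∈ A, quadraticChar (ZMod p) (c + a) : ℤ) : ℝ)| ≤
      ((A.card : ℝ) - 2) * √p + 1 := by
  obtain ⟨a₀, ha₀⟩ := hne
  have hcard : ((A.erase a₀).image fun a ↦ (a - a₀)⁻¹).card = A.card - 1 := by
    rw [Finset.card_image_of_injective _ fun a b hab ↦ by simpa using hab,
      Finset.card_erase_of_mem ha₀]
  have hpos := Finset.card_pos.mpr ⟨a₀, ha₀⟩
  have h1 := abs_sum_prod_quadraticChar_le_of_odd hp ((A.erase a₀).image fun a ↦ (a - a₀)⁻¹)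
    (hcard ▸ Nat.Even.sub_odd hpos hA odd_one)
  rw [hcard, Nat.cast_sub hpos, Nat.cast_one] at h1
  have h2 : |((∏ a ∈ A.erase a₀, quadraticChar (ZMod p) (a - a₀) : ℤ) : ℝ)| ≤ 1 := by
    exact_mod_cast abs_prod_quadraticChar_le_one (A.erase a₀) fun a ↦ a - a₀
  have h3 : |((∏ b ∈ (A.erase a₀).image fun a ↦ (a - a₀)⁻¹,
      quadraticChar (ZMod p) b : ℤ) : ℝ)| ≤ 1 := by
    exact_mod_cast abs_prod_quadraticChar_le_one _ fun b ↦ b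
  rw [sum_prod_quadraticChar_eq_of_even ha₀ hA, Int.cast_mul, abs_mul, Int.cast_sub]
  refine (mul_le_of_le_one_left (abs_nonneg _) h2).trans ((abs_sub _ _).trans ?_)
  linarith

/-- The bound for a sum of the quadratic character over a product of `k` distinct linear factors
over the field with `L` elements. -/
noncomputable def charSumBound (L k : ℕ) : ℝ :=
  ((k : ℝ) - 1) * √L - (1 + (-1) ^ k) / 2 * (√L - 1)

theorem abs_sum_prod_quadraticChar_le {p : ℕ} [Fact p.Prime] (hp : p ≠ 2) (A : Finset (ZMod p))
    (hne : A.Nonempty) :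
    |((∑ c, ∏ a ∈ A, quadraticChar (ZMod p) (c + a) : ℤ) : ℝ)| ≤ charSumBound p A.card := by
  rcases Nat.even_or_odd A.card with hA | hA
  · refine (abs_sum_prod_quadraticChar_le_of_even hp A hA hne).trans_eq ?_
    rw [charSumBound, hA.neg_one_pow]
    ring
  · refine (abs_sum_prod_quadraticChar_le_of_odd hp A hA).trans_eq ?_
    rw [charSumBound, hA.neg_one_pow]
    ring

theorem sum_powerset_erase_charSumBound {ι : Type*} [Fintype ι] [Nonempty ι] [DecidableEq ι]
    (L : ℕ) :
    ∑ S ∈ (Finset.univ : Finset ι).powerset.erase ∅, charSumBound L S.card =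
      √L * (2 ^ (Fintype.card ι - 1) * ((Fintype.card ι : ℝ) - 3) + 2) +
        2 ^ (Fintype.card ι - 1) - 1 := by
  have hpow : (2 : ℝ) ^ Fintype.card ι = 2 * 2 ^ (Fintype.card ι - 1) := by
    rw [mul_pow_sub_one Fintype.card_ne_zero]
  have hcard : ∑ S ∈ (Finset.univ : Finset ι).powerset, (S.card : ℝ) =
      Fintype.card ι * 2 ^ (Fintype.card ι - 1) := by
    have h := Finset.sum_powerset_apply_card (fun k ↦ k) (x := (Finset.univ : Finset ι))
    simp only [smul_eq_mul, mul_comm (Nat.choose _ _), Finset.card_univ,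
      Nat.sum_range_mul_choose] at h
    exact_mod_cast h
  have hsign : ∑ S ∈ (Finset.univ : Finset ι).powerset, (-1 : ℝ) ^ S.card = 0 := by
    exact_mod_cast Finset.sum_powerset_neg_one_pow_card_of_nonempty
      (Finset.univ_nonempty (α := ι))
  have hall : ∑ S ∈ (Finset.univ : Finset ι).powerset, charSumBound L S.card =
      √L * (2 ^ (Fintype.card ι - 1) * ((Fintype.card ι : ℝ) - 3)) +
        2 ^ (Fintype.card ι - 1) := by
    simp only [charSumBound]
    rw [Finset.sum_sub_distrib, ← Finset.sum_mul, ← Finset.sum_mul, ← Finset.sum_div,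
      Finset.sum_add_distrib, Finset.sum_sub_distrib, hcard, hsign, Finset.sum_const,
      Finset.card_powerset, Finset.card_univ, nsmul_eq_mul, Nat.cast_pow, Nat.cast_ofNat, hpow]
    ring
  rw [← Finset.add_sum_erase _ _ (Finset.empty_mem_powerset _), ← eq_sub_iff_add_eq'] at hall
  rw [hall]
  simp only [charSumBound, Finset.card_empty]
  push_cast
  ring

theorem abs_sum_prod_one_add_sub_le {p : ℕ} [Fact p.Prime] (hp : p ≠ 2) {ι : Type*} [Fintype ι]
    [Nonempty ι] (i : ι → ZMod p) (hi : Function.Injective i) (ε : ι → ℤ) (hε : ∀ t, |ε t| = 1) :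
    |((∑ j, ∏ t, (1 + ε t * quadraticChar (ZMod p) (j + i t)) : ℤ) : ℝ) - p| ≤
      √p * (2 ^ (Fintype.card ι - 1) * ((Fintype.card ι : ℝ) - 3) + 2) +
        2 ^ (Fintype.card ι - 1) - 1 := by
  classical
  have hexp : ∑ j, ∏ t, (1 + ε t * quadraticChar (ZMod p) (j + i t)) =
      p + ∑ S ∈ (Finset.univ : Finset ι).powerset.erase ∅,
        (∏ t ∈ S, ε t) * ∑ j, ∏ t ∈ S, quadraticChar (ZMod p) (j + i t) := by
    simp only [Finset.prod_one_add, Finset.prod_mul_distrib]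
    rw [Finset.sum_comm]
    simp only [← Finset.mul_sum]
    rw [← Finset.add_sum_erase _ _ (Finset.empty_mem_powerset _)]
    simp [ZMod.card]
  rw [hexp, ← sum_powerset_erase_charSumBound]
  push_cast
  rw [add_sub_cancel_left]
  refine (Finset.abs_sum_le_sum_abs _ _).trans (Finset.sum_le_sum fun S hS ↦ ?_)
  have hne := Finset.nonempty_iff_ne_empty.mpr (Finset.ne_of_mem_erase hS)
  have h := abs_sum_prod_quadraticChar_le hp (S.image i) (hne.image i)
  simp only [Finset.prod_image hi.injOn, Finset.card_image_of_injective S hi] at h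
  rw [abs_mul, Finset.abs_prod, Finset.prod_congr rfl fun t _ ↦ by
    rw [← Int.cast_abs, hε t, Int.cast_one], Finset.prod_const_one, one_mul]
  exact_mod_cast h

theorem one_add_sign_mul_quadraticChar {L : ℕ} [Fact L.Prime] {x : ZMod L} (hx : x ≠ 0)
    (b : Bool) [Decidable (legSeq L x ↔ b = true)] :
    1 + (if b then 1 else -1) * quadraticChar (ZMod L) x =
      2 * if legSeq L x ↔ b = true then 1 else 0 := by
  have hseq : legSeq L x ↔ quadraticChar (ZMod L) x = 1 := by
    rw [legSeq, quadraticChar_one_iff_isSquare hx]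
    exact and_iff_right hx
  simp only [hseq]
  rcases quadraticChar_dichotomy hx with h | h <;> cases b <;> simp [h]

theorem abs_pattern_sub_prod_le {L : ℕ} [Fact L.Prime] {ι : Type*} [Fintype ι] (i : ι → ZMod L)
    (hi : Function.Injective i) (b : ι → Bool) (j : ZMod L)
    [Decidable (∀ t, (legSeq L (j + i t) ↔ b t = true))] :
    |(2 ^ Fintype.card ι * if ∀ t, (legSeq L (j + i t) ↔ b t = true) then 1 else 0) -
        ∏ t, (1 + (if b t then 1 else -1) * quadraticChar (ZMod L) (j + i t))| ≤
      ∑ t, if j + i t = 0 then (2 ^ (Fintype.card ι - 1) : ℤ) else 0 := by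
  classical
  by_cases h : ∃ t, j + i t = 0
  · obtain ⟨t₀, ht₀⟩ := h
    have hne (t : ι) (ht : t ∈ Finset.univ.erase t₀) : j + i t ≠ 0 := fun h0 ↦
      Finset.ne_of_mem_erase ht (hi (add_left_cancel (h0.trans ht₀.symm)))
    have : Nonempty ι := ⟨t₀⟩
    have hpow : (2 : ℤ) ^ Fintype.card ι = 2 * 2 ^ (Fintype.card ι - 1) := by
      rw [mul_pow_sub_one Fintype.card_ne_zero]
    refine le_trans ?_ (Finset.single_le_sum (fun t _ ↦ ?_) (Finset.mem_univ t₀))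
    · rw [if_pos ht₀, ← Finset.mul_prod_erase _ _ (Finset.mem_univ t₀), ht₀, quadraticChar_zero,
        mul_zero, add_zero, one_mul,
        Finset.prod_congr rfl fun t ht ↦ one_add_sign_mul_quadraticChar (hne t ht) (b t),
        Finset.prod_mul_distrib, Finset.prod_const, Finset.card_erase_of_mem (Finset.mem_univ _),
        Finset.card_univ, Finset.prod_boole, hpow]
      have hpos : (0 : ℤ) < 2 ^ (Fintype.card ι - 1) := by positivity
      split_ifs with h1 h2
      · rw [abs_le]
        constructor <;> linarith
      · exact absurd (fun t _ ↦ h1 t) h2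
      · rw [abs_le]
        constructor <;> linarith
      · simp
    · split_ifs <;> positivity
  · push Not at h
    rw [Finset.prod_congr rfl fun t _ ↦ one_add_sign_mul_quadraticChar (h t) (b t),
      Finset.prod_mul_distrib, Finset.prod_boole]
    simp [h]

theorem stmt15 (L : ℕ) (hL : Nat.Prime L) (hmod : L % 4 = 3)
    (s : ℕ) (hs : 3 ≤ s) (i : Fin s → ZMod L) (hi : Function.Injective i)
    (b : Fin s → Bool) :
    |(Nat.card {j : ZMod L // ∀ t, (legSeq L (j + i t) ↔ b t = true)} : ℝ) -
        (L : ℝ) / 2 ^ s| ≤ legBound L s := by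
  classical
  have : Fact L.Prime := ⟨hL⟩
  have hL2 : L ≠ 2 := by omega
  have : Nonempty (Fin s) := ⟨⟨0, by omega⟩⟩
  set N := Nat.card {j : ZMod L // ∀ t, (legSeq L (j + i t) ↔ b t = true)} with hN
  let ε : Fin s → ℤ := fun t ↦ if b t then 1 else -1
  have hmain := abs_sum_prod_one_add_sub_le hL2 i hi ε fun t ↦ by
    simp only [ε]
    split_ifs <;> simp
  have hcount : (N : ℤ) =
      ∑ j : ZMod L, if ∀ t, (legSeq L (j + i t) ↔ b t = true) then 1 else 0 := by
    rw [hN, Nat.card_eq_fintype_card, Fintype.card_subtype, Finset.sum_boole]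
  have hdiff : |2 ^ s * (N : ℤ) - ∑ j, ∏ t, (1 + ε t * quadraticChar (ZMod L) (j + i t))| ≤
      s * 2 ^ (s - 1) := by
    rw [hcount, Finset.mul_sum, ← Finset.sum_sub_distrib]
    refine (Finset.abs_sum_le_sum_abs _ _).trans
      ((Finset.sum_le_sum fun j _ ↦ ?_).trans_eq
        (b := ∑ j : ZMod L, ∑ t, if j + i t = 0 then (2 ^ (s - 1) : ℤ) else 0) ?_)
    · simpa only [Fintype.card_fin] using abs_pattern_sub_prod_le i hi b j
    · rw [Finset.sum_comm]
      simp [add_eq_zero_iff_eq_neg]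
  have hdiff' : |2 ^ s * (N : ℝ) -
      ((∑ j, ∏ t, (1 + ε t * quadraticChar (ZMod L) (j + i t)) : ℤ) : ℝ)| ≤
      s * 2 ^ (s - 1) := by
    exact_mod_cast hdiff
  rw [Fintype.card_fin] at hmain
  have hpos : (0 : ℝ) < 2 ^ s := by positivity
  rw [legBound, le_div_iff₀ hpos, ← abs_of_pos hpos, ← abs_mul, abs_of_pos hpos, sub_mul,
    div_mul_cancel₀ _ hpos.ne', mul_comm]
  refine (abs_sub_le _ _ _).trans ((add_le_add hdiff' hmain).trans_eq ?_)
  ring
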